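/- arXiv:2412.00995 — 2 statements merged into one kernel-verified Lean document; each statement's English description precedes it below -/
import Mathlib

section
/- Fix a prime p. For k ≥ 0 let C^{(k)} := PGL₂(ℤ_p)·diag(p^k,1)·PGL₂(ℤ_p) ⊂ PGL₂(ℚ_p), and for f ∈ V(ℤ_p) let C^{(k)}_f := {g ∈ C^{(k)} : g·f ∈ V(ℤ_p)} and m_p^{(k)}(f) := #(PGL₂(ℤ_p)\C^{(k)}_f). Then: (i) m_p^{(0)}(f) = 1 for all f ∈ V(ℤ_p); (ii) for every f ∈ V(ℤ_p) with Δ(f) ≠ 0 one has m_p(f) = Σ_{k≥0} m_p^{(k)}(f); (iii) for every k, if f₁ ≡ f₂ (mod p^{2k}V(ℤ_p)) then m_p^{(k)}(f₁) = m_p^{(k)}(f₂); and (iv) if m_p^{(k)}(f) ≠ 0 then p^{2k} divides Δ(f). -/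
noncomputable section

namespace BQPaper

/-- A binary quartic form `a x⁴ + b x³y + c x²y² + d xy³ + e y⁴` over `R`,
recorded by its coefficients. -/
structure BQ (R : Type*) where
  a : R
  b : R
  c : R
  d : R
  e : R

/-- A 2×2 matrix `!![p, q; r, s]`, recorded by its entries. -/
structure Mat2 (R : Type*) where
  p : R
  q : R
  r : R
  s : R

variable {R S : Type*} [CommRing R] [CommRing S]

def Mat2.det (m : Mat2 R) : R := m.p * m.s - m.q * m.r

/-- Matrix product. -/
def Mat2.mul (m n : Mat2 R) : Mat2 R :=
  ⟨m.p * n.p + m.q * n.r, m.p * n.q + m.q * n.s,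
   m.r * n.p + m.s * n.r, m.r * n.q + m.s * n.s⟩

/-- Scalar multiple of a matrix. -/
def Mat2.smul (z : R) (m : Mat2 R) : Mat2 R := ⟨z * m.p, z * m.q, z * m.r, z * m.s⟩

def Mat2.map (φ : R →+* S) (m : Mat2 R) : Mat2 S := ⟨φ m.p, φ m.q, φ m.r, φ m.s⟩

/-- Evaluation of a binary quartic form at `(x, y)`. -/
def BQ.eval (f : BQ R) (x y : R) : R :=
  f.a * x ^ 4 + f.b * x ^ 3 * y + f.c * x ^ 2 * y ^ 2 + f.d * x * y ^ 3 + f.e * y ^ 4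

/-- The invariant `I(f) = 12ae − 3bd + c²`. -/
def BQ.invI (f : BQ R) : R := 12 * f.a * f.e - 3 * f.b * f.d + f.c ^ 2

/-- The invariant `J(f) = 72ace + 9bcd − 27ad² − 27eb² − 2c³`. -/
def BQ.invJ (f : BQ R) : R :=
  72 * f.a * f.c * f.e + 9 * f.b * f.c * f.d - 27 * f.a * f.d ^ 2
    - 27 * f.e * f.b ^ 2 - 2 * f.c ^ 3

/-- The discriminant of a binary quartic form; one has `Δ = (4I³ − J²)/27`. -/
def BQ.disc (f : BQ R) : R :=
  256 * f.a ^ 3 * f.e ^ 3 - 192 * f.a ^ 2 * f.b * f.d * f.e ^ 2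
    - 128 * f.a ^ 2 * f.c ^ 2 * f.e ^ 2 + 144 * f.a ^ 2 * f.c * f.d ^ 2 * f.e
    - 27 * f.a ^ 2 * f.d ^ 4 + 144 * f.a * f.b ^ 2 * f.c * f.e ^ 2
    - 6 * f.a * f.b ^ 2 * f.d ^ 2 * f.e - 80 * f.a * f.b * f.c ^ 2 * f.d * f.e
    + 18 * f.a * f.b * f.c * f.d ^ 3 + 16 * f.a * f.c ^ 4 * f.e
    - 4 * f.a * f.c ^ 3 * f.d ^ 2 - 27 * f.b ^ 4 * f.e ^ 2
    + 18 * f.b ^ 3 * f.c * f.d * f.e - 4 * f.b ^ 3 * f.d ^ 3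
    - 4 * f.b ^ 2 * f.c ^ 3 * f.e + f.b ^ 2 * f.c ^ 2 * f.d ^ 2

/-- Multiplication of all coefficients of a form by a scalar. -/
def BQ.rsmul (t : R) (f : BQ R) : BQ R := ⟨t * f.a, t * f.b, t * f.c, t * f.d, t * f.e⟩

/-- Substitution action of a 2×2 matrix on binary quartic forms:
`(m • f)(x,y) = f((x,y)·m) = f(px + ry, qx + sy)` for `m = !![p, q; r, s]`. -/
def BQ.subst (m : Mat2 R) (f : BQ R) : BQ R where
  a := f.a * m.p ^ 4 + f.b * m.p ^ 3 * m.q + f.c * m.p ^ 2 * m.q ^ 2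
      + f.d * m.p * m.q ^ 3 + f.e * m.q ^ 4
  b := 4 * f.a * m.p ^ 3 * m.r + f.b * m.p ^ 3 * m.s + 3 * f.b * m.p ^ 2 * m.q * m.r
      + 2 * f.c * m.p ^ 2 * m.q * m.s + 2 * f.c * m.p * m.q ^ 2 * m.r
      + 3 * f.d * m.p * m.q ^ 2 * m.s + f.d * m.q ^ 3 * m.r + 4 * f.e * m.q ^ 3 * m.s
  c := 6 * f.a * m.p ^ 2 * m.r ^ 2 + 3 * f.b * m.p ^ 2 * m.r * m.s
      + 3 * f.b * m.p * m.q * m.r ^ 2 + f.c * m.p ^ 2 * m.s ^ 2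
      + 4 * f.c * m.p * m.q * m.r * m.s + f.c * m.q ^ 2 * m.r ^ 2
      + 3 * f.d * m.p * m.q * m.s ^ 2 + 3 * f.d * m.q ^ 2 * m.r * m.s
      + 6 * f.e * m.q ^ 2 * m.s ^ 2
  d := 4 * f.a * m.p * m.r ^ 3 + 3 * f.b * m.p * m.r ^ 2 * m.s + f.b * m.q * m.r ^ 3
      + 2 * f.c * m.p * m.r * m.s ^ 2 + 2 * f.c * m.q * m.r ^ 2 * m.s
      + f.d * m.p * m.s ^ 3 + 3 * f.d * m.q * m.r * m.s ^ 2 + 4 * f.e * m.q * m.s ^ 3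
  e := f.a * m.r ^ 4 + f.b * m.r ^ 3 * m.s + f.c * m.r ^ 2 * m.s ^ 2
      + f.d * m.r * m.s ^ 3 + f.e * m.s ^ 4

/-- The twisted action `(γ·f)(x,y) = f((x,y)·γ)/det(γ)²`, which descends to `PGL₂`.
(`Ring.inverse` is the genuine inverse when `det` is a unit.) -/
def BQ.twist (m : Mat2 R) (f : BQ R) : BQ R :=
  BQ.rsmul (Ring.inverse m.det ^ 2) (f.subst m)

/-- Coefficientwise map of forms along a ring homomorphism. -/
def BQ.map (φ : R →+* S) (f : BQ R) : BQ S := ⟨φ f.a, φ f.b, φ f.c, φ f.d, φ f.e⟩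

end BQPaper

namespace BQPaper

variable (p : ℕ) [Fact p.Prime]

/-- A binary quartic form over `ℚ_p` is integral if all its coefficients lie
in `ℤ_p`. -/
def IsIntFormP (f : BQ ℚ_[p]) : Prop :=
  ‖f.a‖ ≤ 1 ∧ ‖f.b‖ ≤ 1 ∧ ‖f.c‖ ≤ 1 ∧ ‖f.d‖ ≤ 1 ∧ ‖f.e‖ ≤ 1

/-- A matrix over `ℚ_p` lies in `GL₂(ℤ_p)` if its entries lie in `ℤ_p` and its
determinant is a `p`-adic unit. -/
def IsIntUnitMatP (m : Mat2 ℚ_[p]) : Prop :=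
  ‖m.p‖ ≤ 1 ∧ ‖m.q‖ ≤ 1 ∧ ‖m.r‖ ≤ 1 ∧ ‖m.s‖ ≤ 1 ∧ ‖m.det‖ = 1

/-- Membership in the Cartan cell
`C^{(k)} = PGL₂(ℤ_p)·diag(p^k,1)·PGL₂(ℤ_p) ⊆ PGL₂(ℚ_p)`, presented by matrices:
`m` lies over `C^{(k)}` iff it is a nonzero scalar multiple of
`u₁·diag(p^k,1)·u₂` with `u₁, u₂ ∈ GL₂(ℤ_p)`. -/
def InCartan (k : ℕ) (m : Mat2 ℚ_[p]) : Prop :=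
  ∃ (u₁ u₂ : Mat2 ℚ_[p]) (z : ℚ_[p]), IsIntUnitMatP p u₁ ∧ IsIntUnitMatP p u₂ ∧ z ≠ 0 ∧
    m = Mat2.smul z (Mat2.mul (Mat2.mul u₁ ⟨(p : ℚ_[p]) ^ k, 0, 0, 1⟩) u₂)

/-- The canonical ring map `ℤ_p → ℚ_p`. -/
def toQp : ℤ_[p] →+* ℚ_[p] := PadicInt.Coe.ringHom

/-- `C^{(k)}_f = {g ∈ C^{(k)} : g·f ∈ V(ℤ_p)}`, presented by matrices. -/
def CartanSet (k : ℕ) (f : BQ ℤ_[p]) : Type _ :=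
  {m : Mat2 ℚ_[p] // InCartan p k m ∧ IsUnit m.det ∧
    IsIntFormP p ((f.map (toQp p)).twist m)}

/-- Left `PGL₂(ℤ_p)`-coset equivalence. -/
def cosetRel (k : ℕ) (f : BQ ℤ_[p]) (m₁ m₂ : CartanSet p k f) : Prop :=
  ∃ (u : Mat2 ℚ_[p]) (z : ℚ_[p]), IsIntUnitMatP p u ∧ z ≠ 0 ∧
    m₂.val = Mat2.smul z (Mat2.mul u m₁.val)

/-- `m_p^{(k)}(f) = #(PGL₂(ℤ_p)\C^{(k)}_f)`. -/
def mpk (k : ℕ) (f : BQ ℤ_[p]) : ℕ := Nat.card (Quot (cosetRel p k f))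

/-- `PGL₂(ℚ_p)_f`, presented by matrices. -/
def LocalSet (f : BQ ℤ_[p]) : Type _ :=
  {m : Mat2 ℚ_[p] // IsUnit m.det ∧ IsIntFormP p ((f.map (toQp p)).twist m)}

def localRel (f : BQ ℤ_[p]) (m₁ m₂ : LocalSet p f) : Prop :=
  ∃ (u : Mat2 ℚ_[p]) (z : ℚ_[p]), IsIntUnitMatP p u ∧ z ≠ 0 ∧
    m₂.val = Mat2.smul z (Mat2.mul u m₁.val)

/-- `m_p(f) = #(PGL₂(ℤ_p)\PGL₂(ℚ_p)_f)`. -/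
def mp (f : BQ ℤ_[p]) : ℕ := Nat.card (Quot (localRel p f))

/-- Coefficientwise congruence `f ≡ g (mod p^j V(ℤ_p))`. -/
def CongMod (j : ℕ) (f g : BQ ℤ_[p]) : Prop :=
  (p : ℤ_[p]) ^ j ∣ (f.a - g.a) ∧ (p : ℤ_[p]) ^ j ∣ (f.b - g.b) ∧
  (p : ℤ_[p]) ^ j ∣ (f.c - g.c) ∧ (p : ℤ_[p]) ^ j ∣ (f.d - g.d) ∧
  (p : ℤ_[p]) ^ j ∣ (f.e - g.e)

section helpers

theorem BQ.ext' {R : Type*} {f g : BQ R} (ha : f.a = g.a) (hb : f.b = g.b) (hc : f.c = g.c)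
    (hd : f.d = g.d) (he : f.e = g.e) : f = g := by
  cases f; cases g; simp_all

theorem Mat2.ext' {R : Type*} {f g : Mat2 R} (ha : f.p = g.p) (hb : f.q = g.q) (hc : f.r = g.r)
    (hd : f.s = g.s) : f = g := by
  cases f; cases g; simp_all

def Mat2.adj {R : Type*} [CommRing R] (m : Mat2 R) : Mat2 R := ⟨m.s, -m.q, -m.r, m.p⟩

def Mat2.one {R : Type*} [CommRing R] : Mat2 R := ⟨1, 0, 0, 1⟩

def BQ.add {R : Type*} [CommRing R] (f g : BQ R) : BQ R :=
  ⟨f.a + g.a, f.b + g.b, f.c + g.c, f.d + g.d, f.e + g.e⟩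

section ring
variable {R S : Type*} [CommRing R] [CommRing S]

theorem det_mul (m n : Mat2 R) : (Mat2.mul m n).det = m.det * n.det := by
  simp only [Mat2.det, Mat2.mul]; ring

theorem det_smul (z : R) (n : Mat2 R) : (Mat2.smul z n).det = z ^ 2 * n.det := by
  simp only [Mat2.det, Mat2.smul]; ring

theorem det_adj (m : Mat2 R) : m.adj.det = m.det := by
  simp only [Mat2.det, Mat2.adj]; ring

theorem mul_assoc2 (l m n : Mat2 R) : Mat2.mul (Mat2.mul l m) n = Mat2.mul l (Mat2.mul m n) := by
  apply Mat2.ext' <;> simp only [Mat2.mul] <;> ring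

theorem one_mul2 (m : Mat2 R) : Mat2.mul Mat2.one m = m := by
  apply Mat2.ext' <;> simp [Mat2.mul, Mat2.one]

theorem mul_one2 (m : Mat2 R) : Mat2.mul m Mat2.one = m := by
  apply Mat2.ext' <;> simp [Mat2.mul, Mat2.one]

theorem one_smul2 (m : Mat2 R) : Mat2.smul 1 m = m := by
  apply Mat2.ext' <;> simp [Mat2.smul]

theorem smul_smul2 (y z : R) (m : Mat2 R) : Mat2.smul y (Mat2.smul z m) = Mat2.smul (y * z) m := by
  apply Mat2.ext' <;> simp only [Mat2.smul] <;> ring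

theorem mul_smul2 (z : R) (l m : Mat2 R) :
    Mat2.mul l (Mat2.smul z m) = Mat2.smul z (Mat2.mul l m) := by
  apply Mat2.ext' <;> simp only [Mat2.mul, Mat2.smul] <;> ring

theorem smul_mul2 (z : R) (l m : Mat2 R) :
    Mat2.mul (Mat2.smul z l) m = Mat2.smul z (Mat2.mul l m) := by
  apply Mat2.ext' <;> simp only [Mat2.mul, Mat2.smul] <;> ring

theorem adj_mul2 (m : Mat2 R) : Mat2.mul m.adj m = Mat2.smul m.det Mat2.one := by
  apply Mat2.ext' <;> simp only [Mat2.mul, Mat2.smul, Mat2.adj, Mat2.det, Mat2.one] <;> ring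

theorem subst_mul (m n : Mat2 R) (f : BQ R) : f.subst (Mat2.mul m n) = (f.subst n).subst m := by
  apply BQ.ext' <;> simp only [BQ.subst, Mat2.mul] <;> ring

theorem subst_smul (z : R) (m : Mat2 R) (f : BQ R) :
    f.subst (Mat2.smul z m) = BQ.rsmul (z ^ 4) (f.subst m) := by
  apply BQ.ext' <;> simp only [BQ.subst, Mat2.smul, BQ.rsmul] <;> ring

theorem subst_rsmul (z : R) (m : Mat2 R) (f : BQ R) :
    (BQ.rsmul z f).subst m = BQ.rsmul z (f.subst m) := by
  apply BQ.ext' <;> simp only [BQ.subst, BQ.rsmul] <;> ring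

theorem subst_add (m : Mat2 R) (f g : BQ R) :
    (BQ.add f g).subst m = BQ.add (f.subst m) (g.subst m) := by
  apply BQ.ext' <;> simp only [BQ.subst, BQ.add] <;> ring

theorem rsmul_add (z : R) (f g : BQ R) :
    BQ.rsmul z (BQ.add f g) = BQ.add (BQ.rsmul z f) (BQ.rsmul z g) := by
  apply BQ.ext' <;> simp only [BQ.rsmul, BQ.add] <;> ring

theorem rsmul_rsmul (y z : R) (f : BQ R) : BQ.rsmul y (BQ.rsmul z f) = BQ.rsmul (y * z) f := by
  apply BQ.ext' <;> simp only [BQ.rsmul] <;> ring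

theorem one_rsmul (f : BQ R) : BQ.rsmul 1 f = f := by
  apply BQ.ext' <;> simp [BQ.rsmul]

theorem subst_one (f : BQ R) : f.subst Mat2.one = f := by
  apply BQ.ext' <;> simp [BQ.subst, Mat2.one]

theorem subst_map (φ : R →+* S) (m : Mat2 R) (f : BQ R) :
    (f.map φ).subst (m.map φ) = (f.subst m).map φ := by
  have h2 : φ 2 = 2 := map_ofNat φ 2
  have h3 : φ 3 = 3 := map_ofNat φ 3
  have h4 : φ 4 = 4 := map_ofNat φ 4
  have h6 : φ 6 = 6 := map_ofNat φ 6
  apply BQ.ext' <;> simp [BQ.subst, BQ.map, Mat2.map, h2, h3, h4, h6]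

theorem det_map (φ : R →+* S) (m : Mat2 R) : (m.map φ).det = φ m.det := by
  simp [Mat2.det, Mat2.map]

theorem invI_subst (m : Mat2 R) (f : BQ R) : (f.subst m).invI = m.det ^ 4 * f.invI := by
  simp only [BQ.subst, BQ.invI, Mat2.det]; ring

set_option maxHeartbeats 4000000 in
theorem invJ_subst (m : Mat2 R) (f : BQ R) : (f.subst m).invJ = m.det ^ 6 * f.invJ := by
  simp only [BQ.subst, BQ.invJ, Mat2.det]; ring

theorem disc_IJ (f : BQ R) : 27 * f.disc = 4 * f.invI ^ 3 - f.invJ ^ 2 := by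
  simp only [BQ.disc, BQ.invJ, BQ.invI]; ring

theorem disc_subst [IsDomain R] [CharZero R] (m : Mat2 R) (f : BQ R) :
    (f.subst m).disc = m.det ^ 12 * f.disc := by
  have h1 := disc_IJ (f.subst m)
  have h2 := disc_IJ f
  rw [invI_subst, invJ_subst] at h1
  have h27 : (27 : R) ≠ 0 := by exact_mod_cast (by norm_num : (27 : ℕ) ≠ 0)
  apply mul_left_cancel₀ h27
  linear_combination h1 - m.det ^ 12 * h2

end ring

section field
variable {K : Type*} [Field K]

theorem twist_mul (m n : Mat2 K) (f : BQ K) : f.twist (Mat2.mul m n) = (f.twist n).twist m := by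
  simp only [BQ.twist, Ring.inverse_eq_inv', det_mul, subst_mul, subst_rsmul, rsmul_rsmul]
  congr 1
  rw [mul_inv]; ring

theorem twist_smul {z : K} (hz : z ≠ 0) (m : Mat2 K) (f : BQ K) :
    f.twist (Mat2.smul z m) = f.twist m := by
  simp only [BQ.twist, Ring.inverse_eq_inv', det_smul, subst_smul, rsmul_rsmul]
  congr 1
  rw [mul_inv]; field_simp

theorem twist_one (f : BQ K) : f.twist Mat2.one = f := by
  simp only [BQ.twist, subst_one]
  simp [Mat2.det, Mat2.one, one_rsmul]

theorem twist_add (m : Mat2 K) (f g : BQ K) :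
    (BQ.add f g).twist m = BQ.add (f.twist m) (g.twist m) := by
  simp only [BQ.twist, subst_add, rsmul_add]

end field

section padic
variable (p : ℕ) [Fact p.Prime]

theorem isIntForm_iff (f : BQ ℚ_[p]) : IsIntFormP p f ↔ ∃ g : BQ ℤ_[p], f = g.map (toQp p) := by
  constructor
  · rintro ⟨ha, hb, hc, hd, he⟩
    exact ⟨⟨⟨_, ha⟩, ⟨_, hb⟩, ⟨_, hc⟩, ⟨_, hd⟩, ⟨_, he⟩⟩, rfl⟩
  · rintro ⟨g, rfl⟩
    exact ⟨g.a.2, g.b.2, g.c.2, g.d.2, g.e.2⟩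

theorem unit_lift {u : Mat2 ℚ_[p]} (h : IsIntUnitMatP p u) :
    ∃ v : Mat2 ℤ_[p], u = v.map (toQp p) ∧ IsUnit v.det := by
  obtain ⟨h1, h2, h3, h4, h5⟩ := h
  refine ⟨⟨⟨_, h1⟩, ⟨_, h2⟩, ⟨_, h3⟩, ⟨_, h4⟩⟩, rfl, ?_⟩
  rw [PadicInt.isUnit_iff]
  exact h5

theorem unit_of_lift (v : Mat2 ℤ_[p]) (h : IsUnit v.det) : IsIntUnitMatP p (v.map (toQp p)) := by
  refine ⟨v.p.2, v.q.2, v.r.2, v.s.2, ?_⟩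
  rw [det_map]
  exact PadicInt.isUnit_iff.1 h

theorem unit_mul {u v : Mat2 ℚ_[p]} (hu : IsIntUnitMatP p u) (hv : IsIntUnitMatP p v) :
    IsIntUnitMatP p (Mat2.mul u v) := by
  obtain ⟨u, rfl, hu'⟩ := unit_lift p hu
  obtain ⟨v, rfl, hv'⟩ := unit_lift p hv
  have : Mat2.mul (u.map (toQp p)) (v.map (toQp p)) = (Mat2.mul u v).map (toQp p) := by
    apply Mat2.ext' <;> simp [Mat2.mul, Mat2.map]
  rw [this]
  apply unit_of_lift
  rw [det_mul]; exact hu'.mul hv'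

theorem unit_one : IsIntUnitMatP p Mat2.one := by
  simp [IsIntUnitMatP, Mat2.one, Mat2.det]

theorem unit_adj {u : Mat2 ℚ_[p]} (hu : IsIntUnitMatP p u) : IsIntUnitMatP p u.adj := by
  have := det_adj u
  obtain ⟨h1, h2, h3, h4, h5⟩ := hu
  refine ⟨h4, by simpa [Mat2.adj] using h2, by simpa [Mat2.adj] using h3, h1, by rw [this]; exact h5⟩

theorem unit_det_ne {u : Mat2 ℚ_[p]} (hu : IsIntUnitMatP p u) : u.det ≠ 0 := by
  intro h
  have := hu.2.2.2.2
  rw [h] at this; simp at this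

theorem twist_int {u : Mat2 ℚ_[p]} (hu : IsIntUnitMatP p u) {f : BQ ℚ_[p]}
    (hf : IsIntFormP p f) : IsIntFormP p (f.twist u) := by
  have h5 := hu.2.2.2.2
  obtain ⟨v, rfl, -⟩ := unit_lift p hu
  obtain ⟨g, rfl⟩ := (isIntForm_iff p _).1 hf
  rw [BQ.twist, subst_map, Ring.inverse_eq_inv']
  have key : ∀ x : ℤ_[p], ‖((v.map (toQp p)).det⁻¹ ^ 2) * toQp p x‖ ≤ 1 := by
    intro x
    rw [norm_mul, norm_pow, norm_inv, h5]
    simp only [inv_one, one_pow, one_mul]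
    exact x.2
  exact ⟨key _, key _, key _, key _, key _⟩

theorem twist_int_iff {u : Mat2 ℚ_[p]} (hu : IsIntUnitMatP p u) (f : BQ ℚ_[p]) :
    IsIntFormP p (f.twist u) ↔ IsIntFormP p f := by
  refine ⟨fun h => ?_, twist_int p hu⟩
  have := twist_int p (unit_adj p hu) h
  rwa [← twist_mul, adj_mul2, twist_smul (unit_det_ne p hu), twist_one] at this

theorem add_int {f g : BQ ℚ_[p]} (hf : IsIntFormP p f) (hg : IsIntFormP p g) :
    IsIntFormP p (BQ.add f g) := by
  obtain ⟨f, rfl⟩ := (isIntForm_iff p _).1 hf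
  obtain ⟨g, rfl⟩ := (isIntForm_iff p _).1 hg
  refine (isIntForm_iff p _).2 ⟨BQ.add f g, ?_⟩
  apply BQ.ext' <;> simp [BQ.add, BQ.map]

theorem p_ne : (p : ℚ_[p]) ≠ 0 := by exact_mod_cast (Fact.out : p.Prime).ne_zero

theorem toQp_p : toQp p (p : ℤ_[p]) = (p : ℚ_[p]) := map_natCast _ _

theorem toQp_inj : Function.Injective (toQp p) := Subtype.val_injective

theorem congr_int (k : ℕ) (f₁ f₂ : BQ ℤ_[p]) (h : CongMod p (2 * k) f₁ f₂) (m : Mat2 ℚ_[p])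
    (hm : InCartan p k m) (h2 : IsIntFormP p ((f₂.map (toQp p)).twist m)) :
    IsIntFormP p ((f₁.map (toQp p)).twist m) := by
  obtain ⟨⟨a, ha⟩, ⟨b, hb⟩, ⟨c, hc⟩, ⟨d, hd⟩, ⟨e, he⟩⟩ := h
  have hf : f₁.map (toQp p) = BQ.add (f₂.map (toQp p))
      (BQ.rsmul ((p : ℚ_[p]) ^ (2 * k)) ((⟨a, b, c, d, e⟩ : BQ ℤ_[p]).map (toQp p))) := by
    have key : ∀ x y z : ℤ_[p], x - y = (p : ℤ_[p]) ^ (2 * k) * z →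
        toQp p x = toQp p y + (p : ℚ_[p]) ^ (2 * k) * toQp p z := by
      intro x y z h
      have := congrArg (toQp p) h
      rw [map_sub, map_mul, map_pow, toQp_p] at this
      linear_combination this
    apply BQ.ext'
    · exact key _ _ _ ha
    · exact key _ _ _ hb
    · exact key _ _ _ hc
    · exact key _ _ _ hd
    · exact key _ _ _ he
  rw [hf, twist_add]
  refine add_int p h2 ?_
  clear h2
  obtain ⟨u₁, u₂, z, h1, h2, hz, rfl⟩ := hm
  rw [twist_smul hz, twist_mul, twist_mul, twist_int_iff p h1]
  have e1 : ∀ g : BQ ℚ_[p], ∀ t : ℚ_[p], (BQ.rsmul t g).twist u₂ = BQ.rsmul t (g.twist u₂) := by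
    intro g t
    simp only [BQ.twist, subst_rsmul, rsmul_rsmul, mul_comm]
  rw [e1]
  obtain ⟨g, hg⟩ := (isIntForm_iff p _).1
    (twist_int p h2 ((isIntForm_iff p _).2 ⟨⟨a, b, c, d, e⟩, rfl⟩))
  rw [hg]
  have e2 : (⟨(p : ℚ_[p]) ^ k, 0, 0, 1⟩ : Mat2 ℚ_[p]) =
      (⟨(p : ℤ_[p]) ^ k, 0, 0, 1⟩ : Mat2 ℤ_[p]).map (toQp p) := by
    apply Mat2.ext' <;> simp [Mat2.map]
  refine (isIntForm_iff p _).2 ⟨g.subst ⟨(p : ℤ_[p]) ^ k, 0, 0, 1⟩, ?_⟩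
  rw [← subst_map, ← e2, BQ.twist, subst_rsmul, rsmul_rsmul, Ring.inverse_eq_inv']
  have : ((⟨(p : ℚ_[p]) ^ k, 0, 0, 1⟩ : Mat2 ℚ_[p]).det⁻¹ ^ 2 * (p : ℚ_[p]) ^ (2 * k)) = 1 := by
    have := p_ne p
    simp only [Mat2.det]
    field_simp
    ring
  rw [this, one_rsmul]

theorem twistD_d (k : ℕ) (f : BQ ℚ_[p]) :
    (f.twist ⟨(p : ℚ_[p]) ^ k, 0, 0, 1⟩).d = f.d / (p : ℚ_[p]) ^ k := by
  have hp := p_ne p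
  simp [BQ.twist, BQ.subst, BQ.rsmul, Mat2.det]
  field_simp

theorem twistD_e (k : ℕ) (f : BQ ℚ_[p]) :
    (f.twist ⟨(p : ℚ_[p]) ^ k, 0, 0, 1⟩).e = f.e / (p : ℚ_[p]) ^ (2 * k) := by
  have hp := p_ne p
  simp [BQ.twist, BQ.subst, BQ.rsmul, Mat2.det]
  field_simp
  ring

theorem exists_lift {y : ℚ_[p]} (h : ‖y‖ ≤ 1) : ∃ x : ℤ_[p], toQp p x = y := ⟨⟨y, h⟩, rfl⟩

theorem disc_dvd (k : ℕ) (f : BQ ℤ_[p]) (m : Mat2 ℚ_[p])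
    (hm : InCartan p k m) (h : IsIntFormP p ((f.map (toQp p)).twist m)) :
    (p : ℤ_[p]) ^ (2 * k) ∣ f.disc := by
  obtain ⟨u₁, u₂, z, h1, h2, hz, rfl⟩ := hm
  rw [twist_smul hz, twist_mul, twist_mul, twist_int_iff p h1] at h
  have hn := h2.2.2.2.2
  obtain ⟨v, rfl, hv⟩ := unit_lift p h2
  obtain ⟨-, -, -, hd, he⟩ := h
  have hp := p_ne p
  have hk : (p : ℚ_[p]) ^ k ≠ 0 := pow_ne_zero _ hp
  rw [twistD_d, norm_div, BQ.twist, subst_map, Ring.inverse_eq_inv'] at hd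
  rw [twistD_e, norm_div, BQ.twist, subst_map, Ring.inverse_eq_inv'] at he
  simp only [BQ.rsmul] at hd he
  rw [norm_mul, norm_pow (Mat2.det _)⁻¹, norm_inv, hn, inv_one, one_pow, one_mul,
    ← norm_div] at hd he
  set g := f.subst v with hg
  have hd' : (p : ℤ_[p]) ^ k ∣ g.d := by
    obtain ⟨x, hx⟩ := exists_lift p hd
    refine ⟨x, toQp_inj p ?_⟩
    rw [map_mul, map_pow, toQp_p, hx]
    exact (mul_div_cancel₀ _ hk).symm
  have he' : (p : ℤ_[p]) ^ (2 * k) ∣ g.e := by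
    obtain ⟨x, hx⟩ := exists_lift p he
    refine ⟨x, toQp_inj p ?_⟩
    rw [map_mul, map_pow, toQp_p, hx]
    exact (mul_div_cancel₀ _ (pow_ne_zero _ hp)).symm
  have hdisc : (p : ℤ_[p]) ^ (2 * k) ∣ g.disc := by
    obtain ⟨d, hd⟩ := hd'
    obtain ⟨e, he⟩ := he'
    have h2 : (p : ℤ_[p]) ^ (2 * k) = ((p : ℤ_[p]) ^ k) ^ 2 := by ring
    rw [h2] at he ⊢
    simp only [BQ.disc, hd, he]
    generalize (p : ℤ_[p]) ^ k = q
    generalize g.a = a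
    generalize g.b = b
    generalize g.c = c
    refine ⟨256 * a ^ 3 * (q ^ 4 * e ^ 3) - 192 * a ^ 2 * b * (q ^ 3 * d * e ^ 2)
    - 128 * a ^ 2 * c ^ 2 * (q ^ 2 * e ^ 2) + 144 * a ^ 2 * c * (q ^ 2 * d ^ 2 * e)
    - 27 * a ^ 2 * (q ^ 2 * d ^ 4) + 144 * a * b ^ 2 * c * (q ^ 2 * e ^ 2)
    - 6 * a * b ^ 2 * (q ^ 2 * d ^ 2 * e) - 80 * a * b * c ^ 2 * (q * d * e)
    + 18 * a * b * c * (q * d ^ 3) + 16 * a * c ^ 4 * e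
    - 4 * a * c ^ 3 * d ^ 2 - 27 * b ^ 4 * (q ^ 2 * e ^ 2)
    + 18 * b ^ 3 * c * (q * d * e) - 4 * b ^ 3 * (q * d ^ 3)
    - 4 * b ^ 2 * c ^ 3 * e + b ^ 2 * c ^ 2 * d ^ 2, ?_⟩
    ring
  rw [hg, disc_subst] at hdisc
  exact (hv.pow 12).dvd_mul_left.1 hdisc

theorem cartan_lift {k : ℕ} {m : Mat2 ℚ_[p]} (hm : InCartan p k m) :
    ∃ (z : ℚ_[p]) (M : Mat2 ℤ_[p]) (w : ℤ_[p]), z ≠ 0 ∧ IsUnit w ∧ M.det = (p : ℤ_[p]) ^ k * w ∧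
      m = Mat2.smul z (M.map (toQp p)) ∧
      (IsUnit M.p ∨ IsUnit M.q ∨ IsUnit M.r ∨ IsUnit M.s) := by
  obtain ⟨u₁, u₂, z, h1, h2, hz, rfl⟩ := hm
  obtain ⟨u, rfl, hu⟩ := unit_lift p h1
  obtain ⟨v, rfl, hv⟩ := unit_lift p h2
  refine ⟨z, Mat2.mul (Mat2.mul u ⟨(p : ℤ_[p]) ^ k, 0, 0, 1⟩) v, u.det * v.det, hz, hu.mul hv,
    ?_, ?_, ?_⟩
  · simp only [det_mul]
    simp only [Mat2.det]; ring
  · congr 1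
  · set M := Mat2.mul (Mat2.mul u ⟨(p : ℤ_[p]) ^ k, 0, 0, 1⟩) v with hM
    have key : u.det * v.det = (u.r * v.q) * M.p + (-(u.p * v.q)) * M.r +
        (-(u.r * v.p)) * M.q + (u.p * v.p) * M.s := by
      simp only [hM, Mat2.mul, Mat2.det]; ring
    by_contra hcon
    push Not at hcon
    obtain ⟨a, b, c, d⟩ := hcon
    have hmem : u.det * v.det ∈ IsLocalRing.maximalIdeal ℤ_[p] := by
      rw [key]
      refine add_mem (add_mem (add_mem ?_ ?_) ?_) ?_ <;> apply Ideal.mul_mem_left <;>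
        rw [IsLocalRing.mem_maximalIdeal] <;> assumption
    rw [IsLocalRing.mem_maximalIdeal] at hmem
    exact hmem (hu.mul hv)

theorem cartan_norm {k : ℕ} {m : Mat2 ℚ_[p]} (hm : InCartan p k m) :
    ∃ t : ℝ, 0 < t ∧ (‖m.p‖ ≤ t ∧ ‖m.q‖ ≤ t ∧ ‖m.r‖ ≤ t ∧ ‖m.s‖ ≤ t) ∧
      (‖m.p‖ = t ∨ ‖m.q‖ = t ∨ ‖m.r‖ = t ∨ ‖m.s‖ = t) ∧ ‖m.det‖ = t ^ 2 * ((p : ℝ) ^ k)⁻¹ := by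
  obtain ⟨z, M, w, hz, hw, hdet, rfl, hprim⟩ := cartan_lift p hm
  have hle : ∀ x : ℤ_[p], ‖z * toQp p x‖ ≤ ‖z‖ := fun x => by
    rw [norm_mul]
    exact mul_le_of_le_one_right (norm_nonneg _) x.2
  have heq : ∀ x : ℤ_[p], IsUnit x → ‖z * toQp p x‖ = ‖z‖ := fun x hx => by
    rw [norm_mul]
    have : ‖toQp p x‖ = 1 := PadicInt.isUnit_iff.1 hx
    rw [this, mul_one]
  refine ⟨‖z‖, norm_pos_iff.2 hz, ⟨hle _, hle _, hle _, hle _⟩, ?_, ?_⟩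
  · rcases hprim with h | h | h | h
    · exact Or.inl (heq _ h)
    · exact Or.inr (Or.inl (heq _ h))
    · exact Or.inr (Or.inr (Or.inl (heq _ h)))
    · exact Or.inr (Or.inr (Or.inr (heq _ h)))
  · have : ‖toQp p w‖ = 1 := PadicInt.isUnit_iff.1 hw
    rw [det_smul, det_map, hdet, map_mul, map_pow, toQp_p, norm_mul, norm_mul, norm_pow, norm_pow,
      this, Padic.norm_p]
    simp

theorem cartan_unique {k l : ℕ} {m : Mat2 ℚ_[p]} (hk : InCartan p k m) (hl : InCartan p l m) :
    k = l := by
  obtain ⟨t, ht, ⟨a, b, c, d⟩, e, h1⟩ := cartan_norm p hk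
  obtain ⟨t', ht', ⟨a', b', c', d'⟩, e', h2⟩ := cartan_norm p hl
  have : t = t' := by
    apply le_antisymm
    · rcases e with e | e | e | e <;> rw [← e] <;> assumption
    · rcases e' with e | e | e | e <;> rw [← e] <;> assumption
  subst this
  rw [h1] at h2
  have h3 := mul_left_cancel₀ (pow_ne_zero 2 ht.ne') h2
  have hp : 1 < (p : ℝ) := by exact_mod_cast (Fact.out : p.Prime).one_lt
  exact pow_right_injective₀ (by linarith) hp.ne' (inv_injective h3)

def Rel (m₁ m₂ : Mat2 ℚ_[p]) : Prop :=
  ∃ (u : Mat2 ℚ_[p]) (z : ℚ_[p]), IsIntUnitMatP p u ∧ z ≠ 0 ∧ m₂ = Mat2.smul z (Mat2.mul u m₁)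

theorem rel_equiv : Equivalence (Rel p) where
  refl m := ⟨Mat2.one, 1, unit_one p, one_ne_zero, by rw [one_smul2, one_mul2]⟩
  symm := by
    rintro a b ⟨u, z, hu, hz, rfl⟩
    have hd := unit_det_ne p hu
    refine ⟨u.adj, (z * u.det)⁻¹, unit_adj p hu, inv_ne_zero (mul_ne_zero hz hd), ?_⟩
    rw [mul_smul2, ← mul_assoc2, adj_mul2, smul_mul2, one_mul2, smul_smul2, smul_smul2,
      mul_assoc, inv_mul_cancel₀ (mul_ne_zero hz hd), one_smul2]
  trans := by
    rintro a b c ⟨u, z, hu, hz, rfl⟩ ⟨v, y, hv, hy, rfl⟩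
    refine ⟨Mat2.mul v u, y * z, unit_mul p hv hu, mul_ne_zero hy hz, ?_⟩
    rw [mul_smul2, smul_smul2, mul_assoc2]

theorem cartan_rel {k : ℕ} {m n : Mat2 ℚ_[p]} (hk : InCartan p k m) (h : Rel p m n) :
    InCartan p k n := by
  obtain ⟨u₁, u₂, z, h1, h2, hz, rfl⟩ := hk
  obtain ⟨u, y, hu, hy, rfl⟩ := h
  refine ⟨Mat2.mul u u₁, u₂, y * z, unit_mul p hu h1, h2, mul_ne_zero hy hz, ?_⟩
  rw [mul_smul2, smul_smul2, mul_assoc2, mul_assoc2, mul_assoc2]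

theorem exists_val {x : ℚ_[p]} (h0 : x ≠ 0) (h : ‖x‖ ≤ 1) :
    ∃ (k : ℕ) (v : ℚ_[p]), ‖v‖ = 1 ∧ x = v * (p : ℚ_[p]) ^ k := by
  obtain ⟨y, rfl⟩ := exists_lift p h
  have hy : y ≠ 0 := by rintro rfl; simp at h0
  refine ⟨y.valuation, toQp p (PadicInt.unitCoeff hy), ?_, ?_⟩
  · exact PadicInt.isUnit_iff.1 (PadicInt.unitCoeff hy).isUnit
  · conv_lhs => rw [PadicInt.unitCoeff_spec hy]
    rw [map_mul, map_pow, toQp_p]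

theorem cartan_exists_s {m : Mat2 ℚ_[p]} (hm : m.det ≠ 0) (h1 : ‖m.p‖ ≤ ‖m.s‖)
    (h2 : ‖m.q‖ ≤ ‖m.s‖) (h3 : ‖m.r‖ ≤ ‖m.s‖) : ∃ k, InCartan p k m := by
  have hs : m.s ≠ 0 := by
    intro h
    rw [h, norm_zero, norm_le_zero_iff] at h2
    apply hm
    simp [Mat2.det, h, h2]
  have hs' : 0 < ‖m.s‖ := norm_pos_iff.2 hs
  have d1 : ‖m.p / m.s‖ ≤ 1 := by rw [norm_div]; exact (div_le_one hs').2 h1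
  have d2 : ‖m.q / m.s‖ ≤ 1 := by rw [norm_div]; exact (div_le_one hs').2 h2
  have d3 : ‖m.r / m.s‖ ≤ 1 := by rw [norm_div]; exact (div_le_one hs').2 h3
  obtain ⟨x1, e1⟩ := exists_lift p d1
  obtain ⟨x2, e2⟩ := exists_lift p d2
  obtain ⟨x3, e3⟩ := exists_lift p d3
  have hx : m.det / m.s ^ 2 = toQp p (x1 - x2 * x3) := by
    rw [map_sub, map_mul, e1, e2, e3, Mat2.det]; field_simp
  have hle : ‖m.det / m.s ^ 2‖ ≤ 1 := by rw [hx]; exact (x1 - x2 * x3).2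
  obtain ⟨k, v, hv, hk⟩ := exists_val p (div_ne_zero hm (pow_ne_zero 2 hs)) hle
  refine ⟨k, ⟨v, m.q / m.s, 0, 1⟩, ⟨1, 0, m.r / m.s, 1⟩, m.s, ?_, ?_, hs, ?_⟩
  · simp [IsIntUnitMatP, Mat2.det, hv, ← norm_div, d2]
  · simp [IsIntUnitMatP, Mat2.det, ← norm_div, d3]
  · apply Mat2.ext' <;> simp [Mat2.smul, Mat2.mul]
    · rw [← hk, Mat2.det]; field_simp; ring
    · field_simp
    · field_simp

def sw : Mat2 ℚ_[p] := ⟨0, 1, 1, 0⟩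

theorem sw_unit : IsIntUnitMatP p (sw p) := by simp [sw, IsIntUnitMatP, Mat2.det]

theorem sw_sw : Mat2.mul (sw p) (sw p) = Mat2.one := by
  apply Mat2.ext' <;> simp [sw, Mat2.mul, Mat2.one]

theorem cartan_swl {k : ℕ} {m : Mat2 ℚ_[p]} (h : InCartan p k (Mat2.mul (sw p) m)) :
    InCartan p k m := by
  have := cartan_rel p h ⟨sw p, 1, sw_unit p, one_ne_zero, rfl⟩
  rwa [one_smul2, ← mul_assoc2, sw_sw, one_mul2] at this

theorem cartan_swr {k : ℕ} {m : Mat2 ℚ_[p]} (h : InCartan p k (Mat2.mul m (sw p))) :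
    InCartan p k m := by
  obtain ⟨u₁, u₂, z, h1, h2, hz, h⟩ := h
  refine ⟨u₁, Mat2.mul u₂ (sw p), z, h1, unit_mul p h2 (sw_unit p), hz, ?_⟩
  rw [← mul_assoc2, ← smul_mul2, ← h, mul_assoc2, sw_sw, mul_one2]

theorem cartan_exists {m : Mat2 ℚ_[p]} (hm : m.det ≠ 0) : ∃ k, InCartan p k m := by
  have aux2 : ∀ m : Mat2 ℚ_[p], m.det ≠ 0 → max ‖m.p‖ ‖m.q‖ ≤ max ‖m.r‖ ‖m.s‖ →
      ∃ k, InCartan p k m := by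
    intro m hm h
    rw [max_le_iff] at h
    rcases le_total ‖m.r‖ ‖m.s‖ with h' | h'
    · rw [max_eq_right h'] at h
      exact cartan_exists_s p hm h.1 h.2 h'
    · rw [max_eq_left h'] at h
      have hd : (Mat2.mul m (sw p)).det ≠ 0 := by
        rw [det_mul]; exact mul_ne_zero hm (unit_det_ne p (sw_unit p))
      obtain ⟨k, hk⟩ := cartan_exists_s p hd (by simpa [Mat2.mul, sw] using h.2)
        (by simpa [Mat2.mul, sw] using h.1) (by simpa [Mat2.mul, sw] using h')
      exact ⟨k, cartan_swr p hk⟩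
  rcases le_total (max ‖m.p‖ ‖m.q‖) (max ‖m.r‖ ‖m.s‖) with h | h
  · exact aux2 m hm h
  · have hd : (Mat2.mul (sw p) m).det ≠ 0 := by
      rw [det_mul]; exact mul_ne_zero (unit_det_ne p (sw_unit p)) hm
    obtain ⟨k, hk⟩ := aux2 _ hd (by simpa [Mat2.mul, sw] using h)
    exact ⟨k, cartan_swl p hk⟩

theorem cong_unit {k : ℕ} {M N : Mat2 ℤ_[p]} {w y : ℤ_[p]} (hw : IsUnit w) (hy : IsUnit y)
    (hM : M.det = (p : ℤ_[p]) ^ k * w) (hN : N.det = (p : ℤ_[p]) ^ k * y)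
    (h1 : (p : ℤ_[p]) ^ k ∣ N.p - M.p) (h2 : (p : ℤ_[p]) ^ k ∣ N.q - M.q)
    (h3 : (p : ℤ_[p]) ^ k ∣ N.r - M.r) (h4 : (p : ℤ_[p]) ^ k ∣ N.s - M.s) :
    ∃ U : Mat2 ℤ_[p], IsUnit U.det ∧ N = Mat2.mul U M := by
  obtain ⟨a, ha⟩ := h1
  obtain ⟨b, hb⟩ := h2
  obtain ⟨c, hc⟩ := h3
  obtain ⟨d, hd⟩ := h4
  obtain ⟨w', hw'⟩ := hw.exists_right_inv
  let U : Mat2 ℤ_[p] := ⟨1 + w' * (a * M.s - b * M.r), w' * (-a * M.q + b * M.p),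
    w' * (c * M.s - d * M.r), 1 + w' * (-c * M.q + d * M.p)⟩
  have hU : N = Mat2.mul U M := by
    have hM' : w' * (M.p * M.s - M.q * M.r) = (p : ℤ_[p]) ^ k := by
      have : M.p * M.s - M.q * M.r = (p : ℤ_[p]) ^ k * w := hM
      rw [this]; linear_combination (p : ℤ_[p]) ^ k * hw'
    apply Mat2.ext' <;> simp only [Mat2.mul, U]
    · linear_combination ha - a * hM'
    · linear_combination hb - b * hM'
    · linear_combination hc - c * hM'
    · linear_combination hd - d * hM'
  refine ⟨U, ?_, hU⟩
  have h := congrArg Mat2.det hU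
  rw [det_mul, hM, hN] at h
  have hp : (p : ℤ_[p]) ^ k ≠ 0 := pow_ne_zero _ (by exact_mod_cast (Fact.out : p.Prime).ne_zero)
  have h' : y = U.det * w := by
    apply mul_left_cancel₀ hp; linear_combination h
  rw [h'] at hy
  exact isUnit_of_mul_isUnit_left hy

theorem rel_of_cong {k : ℕ} {M N : Mat2 ℤ_[p]} {z z' : ℚ_[p]} {w y : ℤ_[p]} (hz : z ≠ 0)
    (hz' : z' ≠ 0) (hw : IsUnit w) (hy : IsUnit y)
    (hM : M.det = (p : ℤ_[p]) ^ k * w) (hN : N.det = (p : ℤ_[p]) ^ k * y)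
    (h : M.map (PadicInt.toZModPow k) = N.map (PadicInt.toZModPow k)) :
    Rel p (Mat2.smul z (M.map (toQp p))) (Mat2.smul z' (N.map (toQp p))) := by
  have key : ∀ x y : ℤ_[p], PadicInt.toZModPow (p := p) k x = PadicInt.toZModPow k y →
      (p : ℤ_[p]) ^ k ∣ y - x := by
    intro x y hxy
    rw [← Ideal.mem_span_singleton, ← PadicInt.ker_toZModPow, RingHom.mem_ker, map_sub, hxy,
      sub_self]
  obtain ⟨U, hU, rfl⟩ := cong_unit p hw hy hM hN (key _ _ (congrArg Mat2.p h))
    (key _ _ (congrArg Mat2.q h)) (key _ _ (congrArg Mat2.r h)) (key _ _ (congrArg Mat2.s h))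
  refine ⟨U.map (toQp p), z' * z⁻¹, unit_of_lift p U hU, mul_ne_zero hz' (inv_ne_zero hz), ?_⟩
  rw [mul_smul2, smul_smul2, mul_assoc, inv_mul_cancel₀ hz, mul_one]
  congr 1

instance quot_finite (k : ℕ) (f : BQ ℤ_[p]) : Finite (Quot (cosetRel p k f)) := by
  choose z M w hz hw hdet hm _ using fun x : CartanSet p k f => cartan_lift p x.2.1
  haveI : NeZero (p ^ k) := ⟨pow_ne_zero _ (Fact.out : p.Prime).ne_zero⟩
  let F : Quot (cosetRel p k f) → ZMod (p ^ k) × ZMod (p ^ k) × ZMod (p ^ k) × ZMod (p ^ k) :=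
    fun q => let N := (M q.out).map (PadicInt.toZModPow k); (N.p, N.q, N.r, N.s)
  apply Finite.of_injective F
  intro q₁ q₂ h
  simp only [F, Prod.mk.injEq] at h
  rw [← Quot.out_eq q₁, ← Quot.out_eq q₂]
  apply Quot.sound
  have := rel_of_cong p (hz q₁.out) (hz q₂.out) (hw q₁.out) (hw q₂.out) (hdet _) (hdet _)
    (Mat2.ext' h.1 h.2.1 h.2.2.1 h.2.2.2)
  rw [← hm, ← hm] at this
  exact this

theorem local_exact {f : BQ ℤ_[p]} {a b : LocalSet p f}
    (h : Quot.mk (localRel p f) a = Quot.mk (localRel p f) b) : Rel p a.val b.val := by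
  have he : Equivalence (localRel p f) :=
    ⟨fun a => (rel_equiv p).refl a.val, fun h => (rel_equiv p).symm h,
      fun h h' => (rel_equiv p).trans h h'⟩
  exact (he.quot_mk_eq_iff _ _).1 h

theorem mpk_ne_zero {k : ℕ} {f : BQ ℤ_[p]} (h : mpk p k f ≠ 0) :
    (p : ℤ_[p]) ^ (2 * k) ∣ f.disc := by
  have : Nonempty (Quot (cosetRel p k f)) := (Nat.card_ne_zero.1 h).1
  obtain ⟨q⟩ := this
  obtain ⟨m, hm, -, hf⟩ := q.out
  exact disc_dvd p k f m hm hf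

theorem mpk_zero (f : BQ ℤ_[p]) : mpk p 0 f = 1 := by
  have hone : InCartan p 0 Mat2.one :=
    ⟨Mat2.one, Mat2.one, 1, unit_one p, unit_one p, one_ne_zero, by
      apply Mat2.ext' <;> simp [Mat2.smul, Mat2.mul, Mat2.one]⟩
  let x : CartanSet p 0 f := ⟨Mat2.one, hone, by simp [Mat2.one, Mat2.det], by
    rw [twist_one]; exact (isIntForm_iff p _).2 ⟨f, rfl⟩⟩
  rw [mpk, Nat.card_eq_one_iff_unique]
  refine ⟨⟨?_⟩, ⟨Quot.mk _ x⟩⟩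
  have key : ∀ a : CartanSet p 0 f, Quot.mk (cosetRel p 0 f) a = Quot.mk _ x := by
    intro a
    symm
    apply Quot.sound
    obtain ⟨u₁, u₂, z, h1, h2, hz, h⟩ := a.2.1
    refine ⟨Mat2.mul u₁ u₂, z, unit_mul p h1 h2, hz, ?_⟩
    rw [h]
    congr 1
    apply Mat2.ext' <;> simp [Mat2.mul, Mat2.one, x]
  rintro ⟨a⟩ ⟨b⟩
  rw [key a, key b]

theorem mpk_congr (k : ℕ) (f₁ f₂ : BQ ℤ_[p]) (h : CongMod p (2 * k) f₁ f₂) :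
    mpk p k f₁ = mpk p k f₂ := by
  have h' : CongMod p (2 * k) f₂ f₁ := by
    obtain ⟨h1, h2, h3, h4, h5⟩ := h
    exact ⟨dvd_sub_comm.1 h1, dvd_sub_comm.1 h2, dvd_sub_comm.1 h3, dvd_sub_comm.1 h4,
      dvd_sub_comm.1 h5⟩
  let e : CartanSet p k f₁ ≃ CartanSet p k f₂ :=
    { toFun := fun m => ⟨m.1, m.2.1, m.2.2.1, congr_int p k f₂ f₁ h' m.1 m.2.1 m.2.2.2⟩
      invFun := fun m => ⟨m.1, m.2.1, m.2.2.1, congr_int p k f₁ f₂ h m.1 m.2.1 m.2.2.2⟩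
      left_inv := fun m => rfl
      right_inv := fun m => rfl }
  exact Nat.card_congr (Quot.congr e (fun a b => Iff.rfl))

theorem disc_bound {f : BQ ℤ_[p]} (hf : f.disc ≠ 0) :
    ∃ N : ℕ, ∀ k, (p : ℤ_[p]) ^ (2 * k) ∣ f.disc → k < N := by
  have hfin : FiniteMultiplicity (p : ℤ_[p]) f.disc :=
    FiniteMultiplicity.of_not_isUnit PadicInt.prime_p.not_isUnit hf
  obtain ⟨n, hn⟩ := hfin
  refine ⟨n + 1, fun k hk => ?_⟩
  by_contra hlt
  exact hn ((pow_dvd_pow _ (by omega)).trans hk)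

theorem mp_eq {f : BQ ℤ_[p]} {N : ℕ} (hN : ∀ k, (p : ℤ_[p]) ^ (2 * k) ∣ f.disc → k < N) :
    mp p f = ∑ k : Fin N, mpk p k f := by
  let G : (Σ k : Fin N, Quot (cosetRel p k f)) → Quot (localRel p f) := fun x =>
    Quot.map (fun m : CartanSet p x.1 f => (⟨m.1, m.2.2⟩ : LocalSet p f)) (fun _ _ h => h) x.2
  have hG : Function.Bijective G := by
    constructor
    · rintro ⟨k, ⟨a⟩⟩ ⟨l, ⟨b⟩⟩ h
      have hr : Rel p a.1 b.1 := local_exact p h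
      have hkl : k = l := Fin.ext (cartan_unique p (cartan_rel p a.2.1 hr) b.2.1)
      subst hkl
      have : Quot.mk (cosetRel p k f) a = Quot.mk (cosetRel p k f) b := Quot.sound hr
      rw [this]
    · rintro ⟨m⟩
      obtain ⟨k, hk⟩ := cartan_exists p m.2.1.ne_zero
      have hlt := hN k (disc_dvd p k f m.1 hk m.2.2)
      exact ⟨⟨⟨k, hlt⟩, Quot.mk _ ⟨m.1, hk, m.2⟩⟩, rfl⟩
  rw [mp, ← Nat.card_eq_of_bijective G hG, Nat.card_sigma]
  rfl

end padic
end helpers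

/-- Properties of the Cartan-cell decomposition of `m_p`:
(i) `m_p^{(0)} ≡ 1`; (ii) `m_p(f) = Σ_k m_p^{(k)}(f)` for `Δ(f) ≠ 0`; (iii) `m_p^{(k)}` is
defined modulo `p^{2k}`; (iv) `m_p^{(k)}(f) ≠ 0` forces `p^{2k} ∣ Δ(f)`. -/
theorem mpk_properties :
    (∀ f : BQ ℤ_[p], mpk p 0 f = 1) ∧
    (∀ f : BQ ℤ_[p], f.disc ≠ 0 →
      {k : ℕ | mpk p k f ≠ 0}.Finite ∧ mp p f = ∑ᶠ k : ℕ, mpk p k f) ∧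
    (∀ (k : ℕ) (f₁ f₂ : BQ ℤ_[p]), CongMod p (2 * k) f₁ f₂ → mpk p k f₁ = mpk p k f₂) ∧
    (∀ (k : ℕ) (f : BQ ℤ_[p]), mpk p k f ≠ 0 → (p : ℤ_[p]) ^ (2 * k) ∣ f.disc) := by
  refine ⟨mpk_zero p, fun f hf => ?_, mpk_congr p, fun k f h => mpk_ne_zero p h⟩
  obtain ⟨N, hN⟩ := disc_bound p hf
  have hsub : ∀ k, mpk p k f ≠ 0 → k < N := fun k hk => hN k (mpk_ne_zero p hk)
  refine ⟨(Set.finite_lt_nat N).subset hsub, ?_⟩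
  rw [mp_eq p hN, finsum_eq_sum_of_support_subset (s := Finset.range N),
    Finset.sum_range]
  intro k hk
  simpa using hsub k hk

end BQPaper
end
end

section
/- Let f(x,y) = ax⁴+bx³y+cx²y²+dxy³+ey⁴ be a binary quartic form with real coefficients, with Δ(f) ≠ 0, and suppose f is ℝ-soluble, i.e., there exist (x₀,y₀,z₀) ∈ ℝ³ with (x₀,y₀) ≠ (0,0) and z₀² = f(x₀,y₀). Let I = I(f), J = J(f), and g(x) = x³ − (I/3)x − (J/27). Then both integrals below are finite and equal: ∫_{{x ∈ ℝ : f(x,1) > 0}} f(x,1)^{−1/2} dx = ∫_{{x ∈ ℝ : g(x) > 0}} g(x)^{−1/2} dx. -/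
noncomputable section

namespace BQPaper

open MeasureTheory

def ph (F : ℝ → ℝ) (x : ℝ) : ENNReal := ENNReal.ofReal (Real.sqrt (F x))⁻¹

lemma ph_pos {F : ℝ → ℝ} {x : ℝ} (h : ph F x ≠ 0) : 0 < F x := by
  by_contra hn
  apply h
  simp [ph, Real.sqrt_eq_zero_of_nonpos (not_lt.1 hn)]

lemma lint_split (φ : ℝ → ENNReal) (S T N : Set ℝ) (hT : MeasurableSet T)
    (hST : Disjoint S T) (hN : N.Finite) (h : ∀ x, φ x ≠ 0 → x ∈ N ∨ x ∈ S ∪ T) :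
    ∫⁻ x, φ x = (∫⁻ x in S, φ x) + ∫⁻ x in T, φ x := by
  rw [← lintegral_union hT hST]
  apply le_antisymm
  · have h1 : ∫⁻ x, φ x = ∫⁻ x in (S ∪ T) ∪ N, φ x := by
      symm
      apply setLIntegral_eq_of_support_subset
      intro x hx
      rcases h x hx with h | h
      · exact Or.inr h
      · exact Or.inl h
    rw [h1]
    have h2 : (((S ∪ T) ∪ N : Set ℝ)) =ᵐ[volume] (S ∪ T : Set ℝ) :=
      union_ae_eq_left_of_ae_eq_empty (ae_eq_empty.2 (hN.measure_zero _))
    rw [setLIntegral_congr h2]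
  · exact setLIntegral_le_lintegral _ _

def qF (A B c d e x : ℝ) : ℝ := A ^ 2 * x ^ 4 + 2 * A * B * x ^ 3 + c * x ^ 2 + d * x + e
def gI (A B c d e : ℝ) : ℝ := 12 * A ^ 2 * e - 3 * (2 * A * B) * d + c ^ 2
def gJ (A B c d e : ℝ) : ℝ := 72 * A ^ 2 * c * e + 9 * (2 * A * B) * c * d - 27 * A ^ 2 * d ^ 2
    - 27 * e * (2 * A * B) ^ 2 - 2 * c ^ 3
def gg (I J t : ℝ) : ℝ := t ^ 3 - (I / 3) * t - (J / 27)
def Tm (A B c x z : ℝ) : ℝ := c / 3 - 2 * A * (z - A * x ^ 2 - B * x)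
def mm (B c t : ℝ) : ℝ := t + 2 * c / 3 - B ^ 2
def vv (A B c d x t : ℝ) : ℝ := 2 * x * A * mm B c t + A * d - B * (c / 3 - t)

lemma key (A B c d e x z : ℝ) :
    vv A B c d x (Tm A B c x z) ^ 2 - gg (gI A B c d e) (gJ A B c d e) (Tm A B c x z)
      = 4 * A ^ 2 * mm B c (Tm A B c x z) * (qF A B c d e x - z ^ 2) := by
  simp only [vv, gg, Tm, mm, qF, gI, gJ]; ring

def Ts (A B c d e σ x : ℝ) : ℝ := Tm A B c x (σ * Real.sqrt (qF A B c d e x))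

def DD (A B c d e σ τ : ℝ) : Set ℝ :=
  {x | 0 < qF A B c d e x ∧ 0 < τ * vv A B c d x (Ts A B c d e σ x) ∧
    mm B c (Ts A B c d e σ x) ≠ 0}

lemma sgn_sq {σ : ℝ} (h : σ = 1 ∨ σ = -1) : σ ^ 2 = 1 := by
  rcases h with h | h <;> rw [h] <;> norm_num

lemma vsq (A B c d e σ x : ℝ) (hσ : σ = 1 ∨ σ = -1) (hF : 0 ≤ qF A B c d e x) :
    vv A B c d x (Ts A B c d e σ x) ^ 2 =
      gg (gI A B c d e) (gJ A B c d e) (Ts A B c d e σ x) := by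
  have h := key A B c d e x (σ * Real.sqrt (qF A B c d e x))
  rw [mul_pow, sgn_sq hσ, Real.sq_sqrt hF] at h
  unfold Ts
  linarith

lemma qF_cont (A B c d e : ℝ) : Continuous (qF A B c d e) := by
  unfold qF; fun_prop

lemma Ts_cont (A B c d e σ : ℝ) : Continuous (Ts A B c d e σ) := by
  have := qF_cont A B c d e
  unfold Ts Tm; fun_prop

lemma DD_meas (A B c d e σ τ : ℝ) : MeasurableSet (DD A B c d e σ τ) := by
  have h1 := qF_cont A B c d e
  have h2 := Ts_cont A B c d e σ
  have h3 : Continuous fun x => τ * vv A B c d x (Ts A B c d e σ x) := by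
    unfold vv mm; fun_prop
  have h4 : Continuous fun x => mm B c (Ts A B c d e σ x) := by
    unfold mm; fun_prop
  exact ((isOpen_lt continuous_const h1).inter ((isOpen_lt continuous_const h3).inter
    (isOpen_ne_fun h4 continuous_const))).measurableSet

lemma sgn_det {τ v v' : ℝ} (h : 0 < τ * v) (h' : 0 < τ * v')
    (hs : v ^ 2 = v' ^ 2) : v = v' := by
  rcases sq_eq_sq_iff_eq_or_eq_neg.1 hs with h1 | h1
  · exact h1
  · subst h1; nlinarith

/-- points are determined by `(t, τ)` -/
lemma x_det {A B c d e σ σ' τ x x' : ℝ} (hA : 0 < A) (hσ : σ = 1 ∨ σ = -1)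
    (hσ' : σ' = 1 ∨ σ' = -1) (hτ : τ = 1 ∨ τ = -1)
    (hx : x ∈ DD A B c d e σ τ) (hx' : x' ∈ DD A B c d e σ' τ)
    (h : Ts A B c d e σ x = Ts A B c d e σ' x') : x = x' ∧ σ = σ' := by
  obtain ⟨h1, h2, h3⟩ := hx
  obtain ⟨h1', h2', h3'⟩ := hx'
  have e1 := vsq A B c d e σ x hσ h1.le
  have e2 := vsq A B c d e σ' x' hσ' h1'.le
  have hv := sgn_det h2 h2' (by rw [e1, e2, h])
  have hxx : x = x' := by
    rw [← h] at hv
    unfold vv at hv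
    have : 2 * A * mm B c (Ts A B c d e σ x) * (x - x') = 0 := by linarith
    rcases mul_eq_zero.1 this with h0 | h0
    · exact absurd h0 (by positivity)
    · linarith
  refine ⟨hxx, ?_⟩
  subst hxx
  unfold Ts Tm at h
  have hs := Real.sqrt_pos.2 h1
  have : (2 * A * Real.sqrt (qF A B c d e x)) * (σ - σ') = 0 := by linarith
  rcases mul_eq_zero.1 this with h0 | h0
  · exact absurd h0 (by positivity)
  · linarith

lemma Ts_deriv {A B c d e σ x : ℝ} (hσ : σ = 1 ∨ σ = -1) (h : 0 < qF A B c d e x) :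
    HasDerivAt (Ts A B c d e σ)
      (-σ * vv A B c d x (Ts A B c d e σ x) / Real.sqrt (qF A B c d e x)) x := by
  have hF : HasDerivAt (qF A B c d e)
      (4 * A ^ 2 * x ^ 3 + 6 * A * B * x ^ 2 + 2 * c * x + d) x := by
    have := ((((hasDerivAt_pow 4 x).const_mul (A ^ 2)).add
      ((hasDerivAt_pow 3 x).const_mul (2 * A * B))).add
      ((hasDerivAt_pow 2 x).const_mul c)).add ((hasDerivAt_id x).const_mul d) |>.add_const e
    refine this.congr_deriv ?_
    norm_num; ring
  have hs := Real.sqrt_pos.2 h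
  have hsq := Real.sq_sqrt h.le
  have h1 := (hF.sqrt h.ne').const_mul σ
  have h2 := (((h1.sub ((hasDerivAt_pow 2 x).const_mul A)).sub
    ((hasDerivAt_id x).const_mul B)).const_mul (2 * A)).const_sub (c / 3)
  refine h2.congr_deriv ?_
  have hs2 := sgn_sq hσ
  unfold Ts Tm vv mm
  generalize Real.sqrt (qF A B c d e x) = s at *
  field_simp
  norm_num
  linear_combination (6 * s * (2 * A * x + B) * A) * hs2

lemma piece {A B c d e σ τ : ℝ} (hA : 0 < A) (hσ : σ = 1 ∨ σ = -1) (hτ : τ = 1 ∨ τ = -1) :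
    ∫⁻ x in DD A B c d e σ τ, ph (qF A B c d e) x =
      ∫⁻ t in Ts A B c d e σ '' DD A B c d e σ τ,
        ph (gg (gI A B c d e) (gJ A B c d e)) t := by
  rw [lintegral_image_eq_lintegral_abs_deriv_mul (DD_meas A B c d e σ τ)
    (fun x hx => (Ts_deriv hσ hx.1).hasDerivWithinAt)
    (fun x hx y hy hxy => (x_det hA hσ hσ hτ hx hy hxy).1)]
  refine setLIntegral_congr_fun (DD_meas A B c d e σ τ) ?_
  intro x hx
  obtain ⟨h1, h2, h3⟩ := hx
  have hv : vv A B c d x (Ts A B c d e σ x) ≠ 0 := by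
    intro h0; rw [h0] at h2; simp at h2
  simp only [ph]
  rw [← vsq A B c d e σ x hσ h1.le, ← ENNReal.ofReal_mul (abs_nonneg _), Real.sqrt_sq_eq_abs]
  congr 1
  rw [abs_div, abs_mul, abs_neg, abs_of_pos (Real.sqrt_pos.2 h1)]
  have : |σ| = 1 := by rcases hσ with h | h <;> rw [h] <;> norm_num
  rw [this]
  have := abs_pos.2 hv
  have := Real.sqrt_pos.2 h1
  field_simp

lemma finite_of_poly (p : Polynomial ℝ) (hp : p ≠ 0) (S : Set ℝ)
    (h : ∀ x ∈ S, p.eval x = 0) : S.Finite := by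
  refine (p.roots.toFinset.finite_toSet).subset ?_
  intro x hx
  simp [hp, h x hx]

lemma finite_gg (I J : ℝ) : {t | gg I J t = 0}.Finite := by
  refine finite_of_poly (Polynomial.X ^ 3 - Polynomial.C (I / 3) * Polynomial.X
    - Polynomial.C (J / 27)) ?_ _ ?_
  · intro h
    have := congrArg (fun p => Polynomial.coeff p 3) h
    simp at this
  · intro x hx
    simpa [gg] using hx

lemma finite_qF {A : ℝ} (hA : 0 < A) (B c d e : ℝ) : {t | qF A B c d e t = 0}.Finite := by
  refine finite_of_poly (Polynomial.C (A ^ 2) * Polynomial.X ^ 4 +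
    Polynomial.C (2 * A * B) * Polynomial.X ^ 3 + Polynomial.C c * Polynomial.X ^ 2 +
    Polynomial.C d * Polynomial.X + Polynomial.C e) ?_ _ ?_
  · intro h
    have := congrArg (fun p => Polynomial.coeff p 4) h
    simp only [Polynomial.coeff_add, Polynomial.coeff_C_mul, Polynomial.coeff_X_pow,
      Polynomial.coeff_X, Polynomial.coeff_C, Polynomial.coeff_zero] at this
    norm_num at this
    exact hA.ne' this
  · intro x hx
    simpa [qF] using hx

lemma finite_quad (a b c : ℝ) (h : ¬ (a = 0 ∧ b = 0 ∧ c = 0)) :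
    {x : ℝ | a * x ^ 2 + b * x + c = 0}.Finite := by
  refine finite_of_poly (Polynomial.C a * Polynomial.X ^ 2 +
    Polynomial.C b * Polynomial.X + Polynomial.C c) ?_ _ ?_
  · intro hp
    apply h
    have h0 := congrArg (fun p => Polynomial.coeff p 0) hp
    have h1 := congrArg (fun p => Polynomial.coeff p 1) hp
    have h2 := congrArg (fun p => Polynomial.coeff p 2) hp
    simp [Polynomial.coeff_X, Polynomial.coeff_C, Polynomial.coeff_X_pow] at h0 h1 h2
    exact ⟨h2, h1, h0⟩
  · intro x hx
    simpa using hx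

lemma finite_fib {A B c d e σ : ℝ} (hA : 0 < A) (hσ : σ = 1 ∨ σ = -1)
    (hns : ∀ w, ¬ (c - B ^ 2 - 2 * w * A = 0 ∧ d - 2 * w * B = 0 ∧ e - w ^ 2 = 0)) (t : ℝ) :
    {x | 0 < qF A B c d e x ∧ Ts A B c d e σ x = t}.Finite := by
  refine (finite_quad _ _ _ (hns ((c / 3 - t) / (2 * A)))).subset ?_
  rintro x ⟨h1, h2⟩
  have hsq := Real.sq_sqrt h1.le
  have hs2 := sgn_sq hσ
  have hw : σ * Real.sqrt (qF A B c d e x) - A * x ^ 2 - B * x = (c / 3 - t) / (2 * A) := by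
    rw [← h2]; unfold Ts Tm; field_simp; ring
  rw [← hw]
  show _ = 0
  have : (σ * Real.sqrt (qF A B c d e x)) ^ 2 = qF A B c d e x := by rw [mul_pow, hs2, hsq, one_mul]
  generalize σ * Real.sqrt (qF A B c d e x) = z at *
  unfold qF at this
  linear_combination -this

lemma coreF {A B c d e σ : ℝ} (hA : 0 < A) (hσ : σ = 1 ∨ σ = -1)
    (hns : ∀ w, ¬ (c - B ^ 2 - 2 * w * A = 0 ∧ d - 2 * w * B = 0 ∧ e - w ^ 2 = 0)) :
    ∫⁻ x, ph (qF A B c d e) x = (∫⁻ x in DD A B c d e σ 1, ph (qF A B c d e) x)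
      + ∫⁻ x in DD A B c d e σ (-1), ph (qF A B c d e) x := by
  have hfin : (⋃ t ∈ ({t | gg (gI A B c d e) (gJ A B c d e) t = 0} ∪ {B ^ 2 - 2 * c / 3}),
      {x | 0 < qF A B c d e x ∧ Ts A B c d e σ x = t}).Finite :=
    Set.Finite.biUnion ((finite_gg _ _).union (Set.finite_singleton _))
      (fun t _ => finite_fib hA hσ hns t)
  refine lint_split _ _ _ _ (DD_meas _ _ _ _ _ _ _) ?_ hfin ?_
  · rw [Set.disjoint_left]
    rintro x ⟨_, h, _⟩ ⟨_, h', _⟩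
    linarith
  · intro x hx
    have hF := ph_pos hx
    have hv := vsq A B c d e σ x hσ hF.le
    by_cases hm : mm B c (Ts A B c d e σ x) = 0
    · left
      refine Set.mem_biUnion (x := Ts A B c d e σ x) (Or.inr ?_) ⟨hF, rfl⟩
      unfold mm at hm
      show _ = _
      linarith
    rcases lt_trichotomy 0 (vv A B c d x (Ts A B c d e σ x)) with h | h | h
    · right; left; exact ⟨hF, by linarith, hm⟩
    · left
      rw [← h] at hv
      refine Set.mem_biUnion (x := Ts A B c d e σ x) (Or.inl ?_) ⟨hF, rfl⟩
      show _ = _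
      rw [← hv]; norm_num
    · right; right; exact ⟨hF, by linarith, hm⟩

lemma coreG {A B c d e τ : ℝ} (hA : 0 < A) (hτ : τ = 1 ∨ τ = -1) :
    ∫⁻ x, ph (gg (gI A B c d e) (gJ A B c d e)) x =
      (∫⁻ t in Ts A B c d e 1 '' DD A B c d e 1 τ, ph (gg (gI A B c d e) (gJ A B c d e)) t)
      + ∫⁻ t in Ts A B c d e (-1) '' DD A B c d e (-1) τ,
        ph (gg (gI A B c d e) (gJ A B c d e)) t := by
  have hfin : ({B ^ 2 - 2 * c / 3} ∪ (fun x => Tm A B c x 0) '' {t | qF A B c d e t = 0}).Finite :=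
    (Set.finite_singleton _).union ((finite_qF hA B c d e).image _)
  refine lint_split _ _ _ _ ?_ ?_ hfin ?_
  · exact (DD_meas _ _ _ _ _ _ _).image_of_measurable_injOn (Ts_cont _ _ _ _ _ _).measurable
      (fun x hx y hy hxy => (x_det hA (Or.inr rfl) (Or.inr rfl) hτ hx hy hxy).1)
  · rw [Set.disjoint_left]
    rintro t ⟨x, hx, rfl⟩ ⟨y, hy, hxy⟩
    have := (x_det hA (Or.inr rfl) (Or.inl rfl) hτ hy hx hxy).2
    norm_num at this
  · intro t ht
    have hg := ph_pos ht
    by_cases hm : mm B c t = 0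
    · left; left
      unfold mm at hm
      show _ = _
      linarith
    have hs := Real.sqrt_pos.2 hg
    have hsq := Real.sq_sqrt hg.le
    set s := Real.sqrt (gg (gI A B c d e) (gJ A B c d e) t) with hsdef
    obtain ⟨x, hx⟩ : ∃ x, vv A B c d x t = τ * s := by
      refine ⟨(τ * s - A * d + B * (c / 3 - t)) / (2 * A * mm B c t), ?_⟩
      unfold vv
      field_simp
      ring
    obtain ⟨z, hz⟩ : ∃ z, Tm A B c x z = t := by
      refine ⟨(c / 3 - t) / (2 * A) + A * x ^ 2 + B * x, ?_⟩
      unfold Tm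
      field_simp
      ring
    have hk := key A B c d e x z
    rw [hz, hx, mul_pow, sgn_sq hτ, hsq] at hk
    have hFz : qF A B c d e x = z ^ 2 := by
      have : 4 * A ^ 2 * mm B c t * (qF A B c d e x - z ^ 2) = 0 := by linarith
      rcases mul_eq_zero.1 this with h0 | h0
      · exact absurd h0 (by positivity)
      · linarith
    have hτs : 0 < τ * vv A B c d x t := by
      rw [hx]
      have := sgn_sq hτ
      nlinarith
    rcases lt_trichotomy 0 z with h | h | h
    · right; left
      have hT : Ts A B c d e 1 x = t := by
        unfold Ts; rw [hFz, Real.sqrt_sq h.le, one_mul, hz]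
      refine ⟨x, ⟨?_, ?_, ?_⟩, hT⟩
      · rw [hFz]; positivity
      · rw [hT]; exact hτs
      · rw [hT]; exact hm
    · left; right
      exact ⟨x, by show _ = _; rw [hFz, ← h]; norm_num, by rw [h]; exact hz⟩
    · right; right
      have hT : Ts A B c d e (-1) x = t := by
        unfold Ts; rw [hFz, Real.sqrt_sq_eq_abs, abs_of_neg h, neg_one_mul, neg_neg, hz]
      refine ⟨x, ⟨?_, ?_, ?_⟩, hT⟩
      · rw [hFz]; have := h.ne; positivity
      · rw [hT]; exact hτs
      · rw [hT]; exact hm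

lemma core {A B c d e : ℝ} (hA : 0 < A)
    (hns : ∀ w, ¬ (c - B ^ 2 - 2 * w * A = 0 ∧ d - 2 * w * B = 0 ∧ e - w ^ 2 = 0)) :
    ∫⁻ x, ph (qF A B c d e) x = ∫⁻ x, ph (gg (gI A B c d e) (gJ A B c d e)) x := by
  have f1 := coreF hA (Or.inl rfl) hns
  have f2 := coreF hA (Or.inr rfl) hns
  have g1 := coreG (B := B) (c := c) (d := d) (e := e) hA (Or.inl rfl)
  have g2 := coreG (B := B) (c := c) (d := d) (e := e) hA (Or.inr rfl)
  rw [← piece hA (Or.inl rfl) (Or.inl rfl), ← piece hA (Or.inr rfl) (Or.inl rfl)] at g1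
  rw [← piece hA (Or.inl rfl) (Or.inr rfl), ← piece hA (Or.inr rfl) (Or.inr rfl)] at g2
  have h2 : 2 * (∫⁻ x, ph (qF A B c d e) x)
      = 2 * ∫⁻ x, ph (gg (gI A B c d e) (gJ A B c d e)) x := by
    rw [two_mul, two_mul]
    nth_rewrite 1 [f1]
    rw [f2]
    nth_rewrite 1 [g1]
    rw [g2]
    ring
  exact (ENNReal.mul_right_inj (by norm_num) (by norm_num)).1 h2

open Filter Topology Asymptotics in
lemma sqrt_abs_int (r : ℝ) :
    IntegrableAtFilter (fun x : ℝ => (Real.sqrt |x - r|)⁻¹) (𝓝 r) := by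
  have h1 : IntervalIntegrable (fun x : ℝ => (Real.sqrt |x|)⁻¹) volume 0 1 := by
    refine (intervalIntegral.intervalIntegrable_rpow' (r := -(1/2)) (by norm_num)).congr ?_
    intro x hx
    rw [Set.uIoc_of_le zero_le_one] at hx
    show _ = _
    dsimp only
    rw [abs_of_pos hx.1, Real.sqrt_eq_rpow, Real.rpow_neg hx.1.le]
  have h2 : IntervalIntegrable (fun x : ℝ => (Real.sqrt |x|)⁻¹) volume (-1) 0 := by
    have := (IntervalIntegrable.iff_comp_neg (f := fun x : ℝ => (Real.sqrt |x|)⁻¹)).1 h1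
    simpa using this.symm
  have h3 := (h2.trans h1).comp_sub_right r
  have h4 := (intervalIntegrable_iff_integrableOn_Ioc_of_le (by linarith)).1 h3
  exact ⟨_, Ioc_mem_nhds (by linarith) (by linarith), h4⟩

open Filter Topology Asymptotics in
lemma gg_integrable (I J : ℝ) (h : 4 * I ^ 3 - J ^ 2 ≠ 0) :
    Integrable (fun x => (Real.sqrt (gg I J x))⁻¹) := by
  have hc : Continuous (gg I J) := by unfold gg; fun_prop
  have hm : Measurable (fun x => (Real.sqrt (gg I J x))⁻¹) :=
    (Real.continuous_sqrt.comp hc).measurable.inv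
  have hma : Measurable (fun x => (Real.sqrt |gg I J x|)⁻¹) :=
    (Real.continuous_sqrt.comp hc.abs).measurable.inv
  have hloc : LocallyIntegrable (fun x => (Real.sqrt |gg I J x|)⁻¹) := by
    intro r
    by_cases hr : gg I J r = 0
    · have hq : r ^ 2 + r * r + r ^ 2 - I / 3 ≠ 0 := by
        intro h0
        apply h
        have hI : I = 9 * r ^ 2 := by linarith
        unfold gg at hr
        rw [hI] at hr
        have hJ : J = -54 * r ^ 3 := by linarith
        rw [hI, hJ]; ring
      have hcq : ContinuousAt (fun x => (Real.sqrt |x ^ 2 + x * r + r ^ 2 - I / 3|)⁻¹) r := by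
        refine ContinuousAt.inv₀ (by fun_prop) ?_
        exact (Real.sqrt_pos.2 (abs_pos.2 hq)).ne'
      have hO : (fun x => (Real.sqrt |gg I J x|)⁻¹) =O[𝓝 r]
          (fun x : ℝ => (Real.sqrt |x - r|)⁻¹) := by
        have := (isBigO_refl (fun x : ℝ => (Real.sqrt |x - r|)⁻¹) (𝓝 r)).mul
          (hcq.tendsto.isBigO_one ℝ)
        simp only [mul_one] at this
        refine this.congr_left ?_
        intro x
        have : gg I J x = (x - r) * (x ^ 2 + x * r + r ^ 2 - I / 3) := by
          unfold gg at hr ⊢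
          linear_combination hr
        rw [this, abs_mul, Real.sqrt_mul (abs_nonneg _), mul_inv]
      exact hO.integrableAtFilter hma.aestronglyMeasurable.stronglyMeasurableAtFilter
        (sqrt_abs_int r)
    · have hcq : ContinuousAt (fun x => (Real.sqrt |gg I J x|)⁻¹) r := by
        refine ContinuousAt.inv₀ (by fun_prop) ?_
        exact (Real.sqrt_pos.2 (abs_pos.2 hr)).ne'
      exact (hcq.tendsto.isBigO_one ℝ).integrableAtFilter
        hma.aestronglyMeasurable.stronglyMeasurableAtFilter
        ((locallyIntegrable_const (1 : ℝ)) r)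
  have hloc2 : LocallyIntegrable (fun x => (Real.sqrt (gg I J x))⁻¹) := by
    refine hloc.mono hm.aestronglyMeasurable (Eventually.of_forall fun x => ?_)
    rw [Real.norm_of_nonneg (by positivity), Real.norm_of_nonneg (by positivity)]
    rcases le_or_gt (gg I J x) 0 with h0 | h0
    · rw [Real.sqrt_eq_zero_of_nonpos h0, inv_zero]; positivity
    · rw [abs_of_pos h0]
  have hI := abs_le.1 (le_refl |I|)
  have hJ := abs_le.1 (le_refl |J|)
  have hI0 := abs_nonneg I
  have hJ0 := abs_nonneg J
  refine hloc2.integrable_of_isBigO_atBot_atTop (g := fun _ => (0 : ℝ))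
    (g' := fun x => x ^ (-(3/2) : ℝ)) ?_ ?_ ?_ ?_
  · refine EventuallyEq.isBigO ?_
    filter_upwards [eventually_le_atBot (-(1 + |I| + |J|))] with x hx
    rw [Real.sqrt_eq_zero_of_nonpos, inv_zero]
    unfold gg
    have : (1 + |I| + |J|) * (-x) ≤ (-x) ^ 2 * (-x) :=
      mul_le_mul_of_nonneg_right (by nlinarith) (by linarith)
    nlinarith
  · exact ⟨Set.univ, univ_mem, by simp⟩
  · refine IsBigO.of_bound (Real.sqrt 2) ?_
    filter_upwards [eventually_ge_atTop (1 + |I| + |J|)] with x hx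
    have hx0 : 0 < x := by linarith
    have h1 : (1 + |I| + |J|) * x ≤ x ^ 2 * x :=
      mul_le_mul_of_nonneg_right (by nlinarith) (by linarith)
    have h2 : x ^ 3 / 2 ≤ gg I J x := by
      unfold gg
      nlinarith
    rw [Real.norm_of_nonneg (by positivity), Real.norm_of_nonneg (by positivity)]
    have h3 : x ^ (-(3/2) : ℝ) = (Real.sqrt (x ^ 3))⁻¹ := by
      rw [Real.rpow_neg hx0.le, Real.sqrt_eq_rpow, ← Real.rpow_natCast, ← Real.rpow_mul hx0.le]
      norm_num
    rw [h3]
    have h4 : Real.sqrt 2 * (Real.sqrt (x ^ 3))⁻¹ = (Real.sqrt (x ^ 3 / 2))⁻¹ := by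
      rw [Real.sqrt_div (by positivity), inv_div, div_eq_mul_inv]
    rw [h4]
    have : 0 < x ^ 3 / 2 := by positivity
    exact inv_anti₀ (Real.sqrt_pos.2 this) (Real.sqrt_le_sqrt h2)
  · exact integrableAtFilter_rpow_atTop_iff.2 (by norm_num)

lemma inv_disc (f : BQ ℝ) : 4 * f.invI ^ 3 - f.invJ ^ 2 = 27 * f.disc := by
  unfold BQ.invI BQ.invJ BQ.disc; ring

def flip (f : BQ ℝ) (x₀ : ℝ) : BQ ℝ := f.subst ⟨x₀, 1, 1, 0⟩

lemma flip_I (f : BQ ℝ) (x₀ : ℝ) : (flip f x₀).invI = f.invI := by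
  simp only [flip, BQ.subst, BQ.invI]; ring

lemma flip_J (f : BQ ℝ) (x₀ : ℝ) : (flip f x₀).invJ = f.invJ := by
  simp only [flip, BQ.subst, BQ.invJ]; ring

lemma flip_disc (f : BQ ℝ) (x₀ : ℝ) : (flip f x₀).disc = f.disc := by
  have h1 := inv_disc f
  have h2 := inv_disc (flip f x₀)
  rw [flip_I, flip_J] at h2
  linarith

lemma flip_a (f : BQ ℝ) (x₀ : ℝ) : (flip f x₀).a = f.eval x₀ 1 := by
  simp only [flip, BQ.subst, BQ.eval]

lemma flip_eval (f : BQ ℝ) (x₀ u : ℝ) (hu : u ≠ 0) :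
    (flip f x₀).eval u 1 = (u ^ 2) ^ 2 * f.eval (x₀ + u⁻¹) 1 := by
  simp only [flip, BQ.subst, BQ.eval]; field_simp; ring

lemma restrict_compl_pt (x : ℝ) : (volume : Measure ℝ).restrict {x}ᶜ = volume :=
  Measure.restrict_eq_self_of_ae_mem (compl_mem_ae_iff.2 (by simp))

lemma flip_int (f : BQ ℝ) (x₀ : ℝ) :
    ∫⁻ x, ph (fun x => f.eval x 1) x = ∫⁻ u, ph (fun x => (flip f x₀).eval x 1) u := by
  have him : (fun u : ℝ => x₀ + u⁻¹) '' {0}ᶜ = {x₀}ᶜ := by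
    ext x
    constructor
    · rintro ⟨u, hu, rfl⟩
      simpa using hu
    · intro hx
      have : x - x₀ ≠ 0 := sub_ne_zero.2 hx
      exact ⟨(x - x₀)⁻¹, by simpa using this, by simp⟩
  have hcv := lintegral_image_eq_lintegral_abs_deriv_mul (s := {0}ᶜ)
    (f := fun u : ℝ => x₀ + u⁻¹) (f' := fun u => -(u ^ 2)⁻¹)
    (measurableSet_singleton (0 : ℝ)).compl
    (fun u hu => ((hasDerivAt_inv hu).const_add x₀).hasDerivWithinAt)
    (fun u _ v _ huv => by simpa using huv) (ph (fun x => f.eval x 1))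
  rw [him, restrict_compl_pt] at hcv
  rw [hcv]
  conv_rhs => rw [← restrict_compl_pt 0]
  refine setLIntegral_congr_fun (measurableSet_singleton (0 : ℝ)).compl ?_
  intro u hu
  have hu : u ≠ 0 := hu
  simp only [ph]
  rw [flip_eval f x₀ u hu, ← ENNReal.ofReal_mul (abs_nonneg _), Real.sqrt_mul (by positivity),
    Real.sqrt_sq (by positivity), abs_neg, abs_of_nonneg (by positivity), mul_inv]

lemma main_pos (f : BQ ℝ) (hΔ : f.disc ≠ 0) (ha : 0 < f.a) :
    ∫⁻ x, ph (fun x => f.eval x 1) x = ∫⁻ x, ph (gg f.invI f.invJ) x := by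
  obtain ⟨a, b, c, d, e⟩ := f
  simp only at ha
  obtain ⟨A, hA, rfl⟩ : ∃ A : ℝ, 0 < A ∧ A ^ 2 = a :=
    ⟨Real.sqrt a, Real.sqrt_pos.2 ha, Real.sq_sqrt ha.le⟩
  obtain ⟨B, rfl⟩ : ∃ B : ℝ, 2 * A * B = b := ⟨b / (2 * A), by field_simp⟩
  have hc := core (A := A) (B := B) (c := c) (d := d) (e := e) hA (by
    rintro w ⟨h1, h2, h3⟩
    apply hΔ
    obtain rfl : c = B ^ 2 + 2 * w * A := by linarith
    obtain rfl : d = 2 * w * B := by linarith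
    obtain rfl : e = w ^ 2 := by linarith
    simp only [BQ.disc]; ring)
  have e1 : (fun x => (BQ.mk (A ^ 2) (2 * A * B) c d e).eval x 1) = qF A B c d e := by
    funext x; simp only [BQ.eval, qF]; ring
  have e2 : (BQ.mk (A ^ 2) (2 * A * B) c d e).invI = gI A B c d e := by
    simp only [BQ.invI, gI]
  have e3 : (BQ.mk (A ^ 2) (2 * A * B) c d e).invJ = gJ A B c d e := by
    simp only [BQ.invJ, gJ]
  rw [e1, e2, e3, hc]

lemma exists_pos (f : BQ ℝ) (hΔ : f.disc ≠ 0)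
    (hsol : ∃ x₀ y₀ z₀ : ℝ, ¬(x₀ = 0 ∧ y₀ = 0) ∧ z₀ ^ 2 = f.eval x₀ y₀) :
    ∃ x, 0 < f.eval x 1 := by
  by_contra! hneg
  -- all values are nonpositive
  have hall : ∀ x y, y ≠ 0 → f.eval x y ≤ 0 := by
    intro x y hy
    have : f.eval x y = (y ^ 2) ^ 2 * f.eval (x / y) 1 := by
      unfold BQ.eval; field_simp
    rw [this]
    exact mul_nonpos_of_nonneg_of_nonpos (by positivity) (hneg _)
  obtain ⟨x₀, y₀, z₀, h0, hz⟩ := hsol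
  -- the form vanishes at `(x₀, y₀)` with both partials zero
  have hnn : 0 ≤ f.eval x₀ y₀ := by rw [← hz]; positivity
  by_cases hy : y₀ = 0
  · subst hy
    have hx : x₀ ≠ 0 := fun h => h0 ⟨h, rfl⟩
    have hflip : ∀ y, y ≠ 0 → f.eval 1 y ≤ 0 := fun y hy => hall 1 y hy
    have ha0 : 0 ≤ f.a := by
      have : f.eval x₀ 0 = f.a * (x₀ ^ 2) ^ 2 := by unfold BQ.eval; ring
      rw [this] at hnn
      exact nonneg_of_mul_nonneg_left hnn (by positivity)
    have hcont : Continuous fun y => f.eval 1 y := by unfold BQ.eval; fun_prop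
    have ha1 : ∀ y, f.eval 1 y ≤ 0 := by
      have hd : Dense ({0}ᶜ : Set ℝ) := dense_compl_singleton 0
      have hcl : IsClosed {y | f.eval 1 y ≤ 0} := isClosed_le hcont continuous_const
      intro y
      have : closure ({0}ᶜ : Set ℝ) ⊆ {y | f.eval 1 y ≤ 0} :=
        hcl.closure_subset_iff.2 (fun y hy => hflip y hy)
      exact this (hd y)
    have ha : f.a = 0 := by
      have := ha1 0
      have h' : f.eval 1 0 = f.a := by unfold BQ.eval; ring
      linarith
    have hmax : IsLocalMax (fun y => f.eval 1 y) 0 := by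
      refine Filter.Eventually.of_forall fun y => ?_
      have h' : f.eval 1 0 = f.a := by unfold BQ.eval; ring
      show f.eval 1 y ≤ f.eval 1 0
      rw [h', ha]; exact ha1 y
    have hder : HasDerivAt (fun y => f.eval 1 y) f.b 0 := by
      unfold BQ.eval
      have h1 := (((hasDerivAt_id (0:ℝ)).const_mul (f.b * 1 ^ 3)).const_add (f.a * 1 ^ 4))
      have h2 := ((h1.add ((hasDerivAt_pow 2 (0:ℝ)).const_mul (f.c * 1 ^ 2))).add
        ((hasDerivAt_pow 3 (0:ℝ)).const_mul (f.d * 1))).add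
        ((hasDerivAt_pow 4 (0:ℝ)).const_mul f.e)
      refine h2.congr_deriv ?_
      norm_num
    have hb := hmax.hasDerivAt_eq_zero hder
    apply hΔ
    simp only [BQ.disc, ha, hb]; ring
  · set r := x₀ / y₀
    have hr0 : f.eval r 1 = 0 := by
      refine le_antisymm (hneg r) ?_
      have : f.eval x₀ y₀ = (y₀ ^ 2) ^ 2 * f.eval r 1 := by
        simp only [r]; unfold BQ.eval; field_simp
      rw [this] at hnn
      exact nonneg_of_mul_nonneg_right hnn (by positivity)
    have hmax : IsLocalMax (fun x => f.eval x 1) r :=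
      Filter.Eventually.of_forall fun x => by
        show f.eval x 1 ≤ f.eval r 1
        rw [hr0]; exact hneg x
    have hder : HasDerivAt (fun x => f.eval x 1)
        (4 * f.a * r ^ 3 + 3 * f.b * r ^ 2 + 2 * f.c * r + f.d) r := by
      have h2 := (((((hasDerivAt_pow 4 r).const_mul f.a).add
        ((hasDerivAt_pow 3 r).const_mul f.b)).add
        ((hasDerivAt_pow 2 r).const_mul f.c)).add
        ((hasDerivAt_id r).const_mul f.d)).add_const f.e
      refine (h2.congr_deriv ?_).congr_of_eventuallyEq (Filter.Eventually.of_forall fun x => ?_)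
      · norm_num; ring
      · simp [BQ.eval]
    have hb := hmax.hasDerivAt_eq_zero hder
    apply hΔ
    rw [← flip_disc f r]
    have ha' : (flip f r).a = 0 := by rw [flip_a, hr0]
    have hb' : (flip f r).b = 0 := by
      rw [← hb]; simp only [flip, BQ.subst]; ring
    simp only [BQ.disc, ha', hb']; ring

lemma ph_set (F : ℝ → ℝ) :
    ∫⁻ x in {x | 0 < F x}, ph F x = ∫⁻ x, ph F x :=
  setLIntegral_eq_of_support_subset fun _ hx => ph_pos hx

lemma intOn_of {F : ℝ → ℝ} (hF : Continuous F) (h : ∫⁻ x, ph F x ≠ ⊤) :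
    IntegrableOn (fun x => (Real.sqrt (F x))⁻¹) {x | 0 < F x} ∧
    ∫ x in {x | 0 < F x}, (Real.sqrt (F x))⁻¹ = (∫⁻ x, ph F x).toReal := by
  have hm : Measurable (fun x => (Real.sqrt (F x))⁻¹) :=
    (Real.continuous_sqrt.comp hF).measurable.inv
  have hnn : ∀ x, 0 ≤ (Real.sqrt (F x))⁻¹ := fun x => by positivity
  constructor
  · refine Integrable.integrableOn ⟨hm.aestronglyMeasurable, ?_⟩
    rw [hasFiniteIntegral_iff_ofReal (Filter.Eventually.of_forall hnn)]
    exact lt_top_iff_ne_top.2 h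
  · rw [integral_eq_lintegral_of_nonneg_ae (Filter.Eventually.of_forall hnn)
      hm.aestronglyMeasurable, ← ph_set F]
    rfl

/-- If `f` is an `ℝ`-soluble binary quartic form with nonzero
discriminant and invariants `I, J`, and `g(x) = x³ − (I/3)x − (J/27)`, then the real
period integrals `∫_{f(x,1)>0} f(x,1)^{−1/2} dx` and `∫_{g>0} g^{−1/2} dx` are both
finite and equal. -/
theorem real_period_integral (f : BQ ℝ) (hΔ : f.disc ≠ 0)
    (hsol : ∃ x₀ y₀ z₀ : ℝ, ¬(x₀ = 0 ∧ y₀ = 0) ∧ z₀ ^ 2 = f.eval x₀ y₀) :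
    IntegrableOn (fun x : ℝ => (Real.sqrt (f.eval x 1))⁻¹) {x : ℝ | 0 < f.eval x 1} ∧
    IntegrableOn
      (fun x : ℝ => (Real.sqrt (x ^ 3 - (f.invI / 3) * x - (f.invJ / 27)))⁻¹)
      {x : ℝ | 0 < x ^ 3 - (f.invI / 3) * x - (f.invJ / 27)} ∧
    (∫ x in {x : ℝ | 0 < f.eval x 1}, (Real.sqrt (f.eval x 1))⁻¹)
      = ∫ x in {x : ℝ | 0 < x ^ 3 - (f.invI / 3) * x - (f.invJ / 27)},
          (Real.sqrt (x ^ 3 - (f.invI / 3) * x - (f.invJ / 27)))⁻¹ := by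
  obtain ⟨x, hx⟩ := exists_pos f hΔ hsol
  have hE : ∫⁻ x, ph (fun x => f.eval x 1) x = ∫⁻ x, ph (gg f.invI f.invJ) x := by
    rw [flip_int f x, main_pos (flip f x) (by rwa [flip_disc]) (by rwa [flip_a]), flip_I, flip_J]
  have hG : ∫⁻ x, ph (gg f.invI f.invJ) x ≠ ⊤ := by
    have := gg_integrable f.invI f.invJ (by rw [inv_disc]; simpa using hΔ)
    exact (this.lintegral_lt_top).ne
  have hc1 : Continuous fun x => f.eval x 1 := by unfold BQ.eval; fun_prop
  have hc2 : Continuous (gg f.invI f.invJ) := by unfold gg; fun_prop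
  have r1 := intOn_of hc1 (by rw [hE]; exact hG)
  have r2 := intOn_of hc2 hG
  refine ⟨r1.1, r2.1, ?_⟩
  rw [r1.2, hE]
  exact r2.2.symm

end BQPaper
end
end
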